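/- Let D be an n×n dissimilarity matrix, let A = (-(1/2) d_ij^2), and let B = H A H be its double mean-centering with H = I - (1/n) J. If B is positive semi-definite of rank m, then there exist points x_1, …, x_n in ℝ^m such that ‖x_r - x_s‖ = d_rs for all r, s; that is, a perfect realization of the dissimilarities exists in m-dimensional Euclidean space. -/

import Mathlib

open Matrix

/-!
Double centering does not change the quadratic form of `A` on vectors with coordinate sum zero.
The differences `e_r - e_s` of standard basis vectors are such vectors, and there the quadratic
form of `A` equals `d_rs ^ 2`. A positive semidefinite `B` of rank `m` is the Gram matrix of vectors
`x_i` spanning an `m`-dimensional space, and its quadratic form at `e_r - e_s` is `‖x_r - x_s‖ ^ 2`.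
-/

section Gram

variable {ι κ 𝕜 E : Type*} [RCLike 𝕜]

section Seminormed

variable [SeminormedAddCommGroup E]

theorem norm_sub_sq_eq_gram [InnerProductSpace ℝ E] (x : ι → E) (r s : ι) :
    ‖x r - x s‖ ^ 2 = gram ℝ x r r + gram ℝ x s s - gram ℝ x r s - gram ℝ x s r := by
  rw [← real_inner_self_eq_norm_sq, inner_sub_left, inner_sub_right, inner_sub_right]
  simp only [gram_apply]
  ring

theorem gram_mulVec_apply [InnerProductSpace 𝕜 E] [Fintype ι] (v : ι → E) (c : ι → 𝕜) (i : ι) :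
    (gram 𝕜 v *ᵥ c) i = inner 𝕜 (v i) (∑ j, c j • v j) := by
  simp only [mulVec, dotProduct, gram_apply, inner_sum, inner_smul_right, mul_comm]

end Seminormed

variable [NormedAddCommGroup E] [InnerProductSpace 𝕜 E]

theorem gram_mulVec_eq_zero_iff [Fintype ι] (v : ι → E) (c : ι → 𝕜) :
    gram 𝕜 v *ᵥ c = 0 ↔ ∑ i, c i • v i = 0 := by
  constructor
  · intro h
    rw [← inner_self_eq_zero (𝕜 := 𝕜), ← star_dotProduct_gram_mulVec, h, dotProduct_zero]
  · intro h
    ext i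
    rw [gram_mulVec_apply, h, inner_zero_right, Pi.zero_apply]

theorem rank_gram [Fintype ι] (v : ι → E) :
    (gram 𝕜 v).rank = Module.finrank 𝕜 (Submodule.span 𝕜 (Set.range v)) := by
  have ker_eq : (gram 𝕜 v).mulVecLin.ker = (Fintype.linearCombination 𝕜 v).ker := by
    ext c
    exact gram_mulVec_eq_zero_iff v c
  have rank_nullity_gram := (gram 𝕜 v).mulVecLin.finrank_range_add_finrank_ker
  have rank_nullity_comb := (Fintype.linearCombination 𝕜 v).finrank_range_add_finrank_ker
  rw [ker_eq] at rank_nullity_gram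
  rw [← Fintype.range_linearCombination, Matrix.rank]
  lia

theorem conjTranspose_mul_self_eq_gram [Fintype κ] (C : Matrix κ ι 𝕜) :
    Cᴴ * C = gram 𝕜 fun i => WithLp.toLp 2 (C.col i) := by
  ext i j
  simp [mul_apply, PiLp.inner_apply, mul_comm]

theorem exists_euclideanSpace_gram_eq [Finite ι] (v : ι → E) :
    ∃ x : ι → EuclideanSpace 𝕜 (Fin (Module.finrank 𝕜 (Submodule.span 𝕜 (Set.range v)))),
      gram 𝕜 x = gram 𝕜 v := by
  have : FiniteDimensional 𝕜 (Submodule.span 𝕜 (Set.range v)) :=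
    .span_of_finite 𝕜 (Set.finite_range v)
  let b := stdOrthonormalBasis 𝕜 (Submodule.span 𝕜 (Set.range v))
  refine ⟨fun i => b.repr ⟨v i, Submodule.subset_span ⟨i, rfl⟩⟩, ?_⟩
  ext i j
  simp only [gram_apply, LinearIsometryEquiv.inner_map_map, Submodule.coe_inner]

open scoped ComplexOrder MatrixOrder in
theorem exists_euclideanSpace_gram_eq_of_posSemidef [Fintype ι] {B : Matrix ι ι 𝕜}
    (hB : B.PosSemidef) : ∃ x : ι → EuclideanSpace 𝕜 (Fin B.rank), gram 𝕜 x = B := by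
  classical
  obtain ⟨C, rfl⟩ : ∃ C : Matrix ι ι 𝕜, B = Cᴴ * C :=
    CStarAlgebra.nonneg_iff_eq_star_mul_self.mp hB.nonneg
  rw [conjTranspose_mul_self_eq_gram, rank_gram]
  exact exists_euclideanSpace_gram_eq _

end Gram

section Centering

variable {ι R : Type*} [DecidableEq ι] [CommRing R]

/-- The centering matrix `I - 1 wᵀ` with weights `w`. When `w` sums to `1`, it subtracts from each
coordinate of a vector the `w`-weighted mean; the constant weights `1 / n` give `H = I - (1 / n) J`.
No condition on the sum of `w` is built in. -/
def centeringMatrix (w : ι → R) : Matrix ι ι R := 1 - vecMulVec 1 w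

theorem centeringMatrix_const (c : R) :
    centeringMatrix (fun _ : ι => c) = 1 - c • of fun _ _ => (1 : R) := by
  ext i j
  simp [centeringMatrix]

theorem isSymm_centeringMatrix_const (c : R) : (centeringMatrix fun _ : ι => c).IsSymm := by
  rw [centeringMatrix_const]
  exact isSymm_one.sub (IsSymm.smul (IsSymm.ext fun _ _ => rfl) c)

variable [Fintype ι]

theorem centeringMatrix_transpose_mulVec_of_sum_eq_zero (w : ι → R) {c : ι → R}
    (hc : ∑ i, c i = 0) : (centeringMatrix w)ᵀ *ᵥ c = c := by
  rw [centeringMatrix, transpose_sub, transpose_one, transpose_vecMulVec, sub_mulVec, one_mulVec,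
    vecMulVec_mulVec, one_dotProduct, hc, MulOpposite.op_zero, zero_smul, sub_zero]

theorem dotProduct_centering_mulVec_of_sum_eq_zero (A : Matrix ι ι R) (w : ι → R) {c : ι → R}
    (hc : ∑ i, c i = 0) :
    c ⬝ᵥ (centeringMatrix w * A * (centeringMatrix w)ᵀ) *ᵥ c = c ⬝ᵥ A *ᵥ c := by
  rw [← mulVec_mulVec, centeringMatrix_transpose_mulVec_of_sum_eq_zero w hc, ← mulVec_mulVec,
    dotProduct_mulVec, ← mulVec_transpose, centeringMatrix_transpose_mulVec_of_sum_eq_zero w hc]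

theorem single_sub_single_dotProduct_mulVec (A : Matrix ι ι R) (r s : ι) :
    (Pi.single r 1 - Pi.single s 1) ⬝ᵥ A *ᵥ (Pi.single r 1 - Pi.single s 1) =
      A r r + A s s - A r s - A s r := by
  simp only [mulVec_sub, mulVec_single_one, sub_dotProduct, dotProduct_sub, single_one_dotProduct,
    col_apply]
  ring

theorem diag_add_diag_sub_offDiag_centering (A : Matrix ι ι R) (w : ι → R) (r s : ι) :
    letI B := centeringMatrix w * A * (centeringMatrix w)ᵀ
    B r r + B s s - B r s - B s r = A r r + A s s - A r s - A s r := by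
  rw [← single_sub_single_dotProduct_mulVec, ← single_sub_single_dotProduct_mulVec]
  exact dotProduct_centering_mulVec_of_sum_eq_zero A w (by simp)

end Centering

theorem dissimilarity_realization_in_rank_dimension_general {ι : Type*} [Fintype ι] [DecidableEq ι]
    (D : Matrix ι ι ℝ) (hsymm : D.IsSymm) (hdiag : ∀ i, D i i = 0) (hnonneg : ∀ i j, 0 ≤ D i j)
    (A B : Matrix ι ι ℝ) (hA : ∀ i j, A i j = -(1 / 2) * D i j ^ 2)
    (w : ι → ℝ) (hB : B = centeringMatrix w * A * (centeringMatrix w)ᵀ) (hpsd : B.PosSemidef) :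
    ∃ x : ι → EuclideanSpace ℝ (Fin B.rank), ∀ r s, ‖x r - x s‖ = D r s := by
  obtain ⟨x, hx⟩ := exists_euclideanSpace_gram_eq_of_posSemidef hpsd
  refine ⟨x, fun r s => (sq_eq_sq₀ (norm_nonneg _) (hnonneg r s)).mp ?_⟩
  calc ‖x r - x s‖ ^ 2 = B r r + B s s - B r s - B s r := by rw [norm_sub_sq_eq_gram, hx]
    _ = A r r + A s s - A r s - A s r := by
      rw [hB, diag_add_diag_sub_offDiag_centering]
    _ = D r s ^ 2 := by
      simp only [hA, hdiag, hsymm.apply r s]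
      ring

/-- **Theorem.** If the double mean-centering `B = H * A * H` of
`A = -(1/2) D∘D` associated to a dissimilarity matrix `D` is positive
semi-definite of rank `m`, then the dissimilarities can be realized perfectly
by a configuration of `n` points in `m`-dimensional Euclidean space. -/
theorem dissimilarity_realization_in_rank_dimension
    (n m : ℕ) (hn : 0 < n) (D : Matrix (Fin n) (Fin n) ℝ)
    (hsymm : D.IsSymm) (hdiag : ∀ i, D i i = 0) (hnonneg : ∀ i j, 0 ≤ D i j)
    (A H B : Matrix (Fin n) (Fin n) ℝ)
    (hA : ∀ i j, A i j = -(1/2) * (D i j)^2)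
    (hH : H = 1 - (n : ℝ)⁻¹ • Matrix.of (fun _ _ => (1 : ℝ)))
    (hB : B = H * A * H)
    (hpsd : B.PosSemidef) (hrank : B.rank = m) :
    ∃ x : Fin n → EuclideanSpace ℝ (Fin m), ∀ r s, ‖x r - x s‖ = D r s := by
  subst hrank
  refine dissimilarity_realization_in_rank_dimension_general D hsymm hdiag hnonneg A B hA
    (fun _ => (n : ℝ)⁻¹) ?_ hpsd
  rw [isSymm_centeringMatrix_const, centeringMatrix_const, ← hH, hB]
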